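/- arXiv:2105.05420 — 3 statements merged into one kernel-verified Lean document; each statement's English description precedes it below -/
import Mathlib

section
/- Let a fusion datum be given on a countable type I. For every γ ∈ I, the formula (L_γ f)(β) := (1/(d γ))·Σ_η (N γ η β)·f(η) (a finite sum for each fixed β) defines a bounded linear operator L_γ on ℓ²(I) with operator norm at most 1; in particular ‖l_γ f‖₂ ≤ ‖f‖₂ for every finitely supported f : I → ℂ. -/
open scoped BigOperators
open Filter
open scoped Classical

/-- A fusion datum on a type `I`: unit, structure constants, involution and a
dimension function satisfying the unit laws, Frobenius reciprocity and
multiplicativity of the dimension function. -/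
structure FusionDatum (I : Type*) where
  e : I
  N : I → I → I → ℕ
  conj : I → I
  d : I → ℝ
  conj_e : conj e = e
  conj_conj : ∀ α, conj (conj α) = α
  N_conj : ∀ α β γ, N α β γ = N (conj β) (conj α) (conj γ)
  one_le_d : ∀ α, 1 ≤ d α
  d_conj : ∀ α, d (conj α) = d α
  N_unit_left : ∀ α γ, N e α γ = if γ = α then 1 else 0
  N_unit_right : ∀ α γ, N α e γ = if γ = α then 1 else 0
  frobenius₁ : ∀ α β γ, N α β γ = N γ (conj β) α
  frobenius₂ : ∀ α β γ, N α β γ = N (conj α) γ β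
  mul_support_finite : ∀ α β, (Function.support fun γ => (N α β γ : ℝ) * d γ).Finite
  d_mul : ∀ α β, (∑ᶠ γ, (N α β γ : ℝ) * d γ) = d α * d β

/-- Weighted cardinality `|S|_w = Σ_{α∈S} (d α)²` of a set. -/
noncomputable def FusionDatum.wcard {I : Type*} (F : FusionDatum I) (S : Set I) : ℝ :=
  ∑ᶠ α ∈ S, F.d α ^ 2

/-- Right γ-boundary `∂_γ S`. -/
def FusionDatum.rBoundary {I : Type*} (F : FusionDatum I) (γ : I) (S : Set I) : Set I :=
  {α | (α ∈ S ∧ ∃ β ∉ S, 0 < F.N α γ β) ∨ (α ∉ S ∧ ∃ β ∈ S, 0 < F.N α γ β)}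

/-- Left γ-boundary `∂ᴸ_γ S`. -/
def FusionDatum.lBoundary {I : Type*} (F : FusionDatum I) (γ : I) (S : Set I) : Set I :=
  {α | (α ∈ S ∧ ∃ β ∉ S, 0 < F.N γ α β) ∨ (α ∉ S ∧ ∃ β ∈ S, 0 < F.N γ α β)}

/-- ℓ²-norm `(Σ_β |g β|²)^{1/2}` of a (finitely supported) function. -/
noncomputable def l2norm {I : Type*} (g : I → ℂ) : ℝ :=
  Real.sqrt (∑ᶠ β, ‖g β‖ ^ 2)

/-- The convolution operator `l_γ`. -/
noncomputable def FusionDatum.lconv {I : Type*} (F : FusionDatum I) (γ : I) (f : I → ℂ) :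
    I → ℂ :=
  fun β => (1 / (F.d γ : ℂ)) * ∑ᶠ η, (F.N γ η β : ℂ) * f η

/-- A state on a unital C*-algebra: a unital positive linear functional. -/
structure CStarState (A : Type*) [NormedRing A] [StarRing A] [NormedAlgebra ℂ A] where
  toFun : A →ₗ[ℂ] ℂ
  map_one : toFun 1 = 1
  pos : ∀ a : A, 0 ≤ (toFun (star a * a)).re ∧ (toFun (star a * a)).im = 0

/-- A CFA-type action of a fusion datum on a unital C*-algebra: `T α a` encodes `χ(α)·a`. -/
structure CFAAction {I : Type*} (F : FusionDatum I) (A : Type*)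
    [NormedRing A] [StarRing A] [NormedAlgebra ℂ A] where
  T : I → A →ₗ[ℂ] A
  map_star : ∀ α a, T α (star a) = star (T α a)
  norm_le : ∀ α a, ‖T α a‖ ≤ F.d α * ‖a‖
  map_one : ∀ α, T α 1 = (F.d α : ℂ) • (1 : A)
  comp_eq : ∀ α β a, T α (T β a) = ∑ᶠ γ, (F.N α β γ) • T γ a

/-- `⟨f|f⟩_A = Σ_α f α · (f α)*`. -/
noncomputable def innerA {I A : Type*} [NormedRing A] [StarRing A] (f : I → A) : A :=
  ∑ᶠ α, f α * star (f α)

/-- `‖f‖_{2,A} = ‖⟨f|f⟩_A‖^{1/2}`. -/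
noncomputable def norm2A {I A : Type*} [NormedRing A] [StarRing A] (f : I → A) : ℝ :=
  Real.sqrt ‖innerA f‖

/-- Twisted convolution `(δ_γ *_σ f)(β) = (1/(d γ))·Σ_η N γ η β · σ_γ(f η)`. -/
noncomputable def FusionDatum.tconv {I A : Type*} [NormedRing A] [NormedAlgebra ℂ A]
    (F : FusionDatum I) (σ : I → A → A) (γ : I) (f : I → A) : I → A :=
  fun β => (((F.d γ)⁻¹ : ℝ) : ℂ) • ∑ᶠ η, (F.N γ η β) • σ γ (f η)

/-- The ℂ-valued Følner vectors `ξ_F = |F|_w^{-1/2} Σ_{α∈F} d α · δ_α`. -/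
noncomputable def xiC {I : Type*} (F : FusionDatum I) (S : Finset I) : I → ℂ :=
  fun α => if α ∈ S then (((Real.sqrt (F.wcard (S : Set I)))⁻¹ * F.d α : ℝ) : ℂ) else 0

/-- The A-valued Følner vectors `ξ_F = |F|_w^{-1/2} Σ_{α∈F} d α · δ_α ⊗ 1_A`. -/
noncomputable def xiA {I : Type*} (F : FusionDatum I) (S : Finset I)
    (A : Type*) [NormedRing A] [NormedAlgebra ℂ A] : I → A :=
  fun α => if α ∈ S then (((Real.sqrt (F.wcard (S : Set I)))⁻¹ * F.d α : ℝ) : ℂ) • (1 : A)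
    else 0

lemma FusionDatum.d_pos' {I : Type*} (F : FusionDatum I) (α : I) : 0 < F.d α :=
  lt_of_lt_of_le one_pos (F.one_le_d α)

lemma FusionDatum.finite_N_right {I : Type*} (F : FusionDatum I) (γ η : I) :
    {β | F.N γ η β ≠ 0}.Finite := by
  refine (F.mul_support_finite γ η).subset ?_
  intro β hβ
  simp only [Function.mem_support]
  exact mul_ne_zero (by exact_mod_cast hβ) (F.d_pos' β).ne'

lemma FusionDatum.finite_N_mid {I : Type*} (F : FusionDatum I) (γ β : I) :
    {η | F.N γ η β ≠ 0}.Finite := by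
  refine (F.finite_N_right (F.conj γ) β).subset ?_
  intro η hη
  simp only [Set.mem_setOf_eq] at hη ⊢
  rwa [← F.frobenius₂]

lemma FusionDatum.sum_right_le {I : Type*} (F : FusionDatum I) (γ η : I) (S : Finset I) :
    ∑ β ∈ S, (F.N γ η β : ℝ) * F.d β ≤ F.d γ * F.d η := by
  rw [← F.d_mul γ η, finsum_eq_sum_of_support_subset (s := (F.mul_support_finite γ η).toFinset ∪ S)]
  · refine Finset.sum_le_sum_of_subset_of_nonneg Finset.subset_union_right ?_
    intro i _ _
    exact mul_nonneg (Nat.cast_nonneg _) (F.d_pos' i).le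
  · intro x hx
    simp only [Finset.coe_union, Set.Finite.coe_toFinset]
    exact Or.inl hx

lemma FusionDatum.sum_mid_le {I : Type*} (F : FusionDatum I) (γ β : I) (S : Finset I) :
    ∑ η ∈ S, (F.N γ η β : ℝ) * F.d η ≤ F.d γ * F.d β := by
  have h := F.sum_right_le (F.conj γ) β S
  rw [F.d_conj] at h
  refine le_trans (le_of_eq ?_) h
  refine Finset.sum_congr rfl fun η _ => ?_
  rw [F.frobenius₂ γ η β]

lemma FusionDatum.lconv_eq_sum {I : Type*} (F : FusionDatum I) (γ β : I) (f : I → ℂ)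
    (T : Finset I) (hT : (F.finite_N_mid γ β).toFinset ⊆ T) :
    F.lconv γ f β = (1 / (F.d γ : ℂ)) * ∑ η ∈ T, (F.N γ η β : ℂ) * f η := by
  unfold FusionDatum.lconv
  rw [finsum_eq_sum_of_support_subset]
  intro η hη
  apply hT
  simp only [Set.Finite.mem_toFinset, Set.mem_setOf_eq]
  intro h
  simp [h] at hη

lemma FusionDatum.lconv_sq_le {I : Type*} (F : FusionDatum I) (γ β : I) (f : I → ℂ)
    (T : Finset I) (hT : (F.finite_N_mid γ β).toFinset ⊆ T) :
    ‖F.lconv γ f β‖ ^ 2 ≤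
      ∑ η ∈ T, ‖f η‖ ^ 2 / (F.d γ * F.d η) * ((F.N γ η β : ℝ) * F.d β) := by
  have hγ := F.d_pos' γ
  have h1 : ‖F.lconv γ f β‖ ≤ (1 / F.d γ) * ∑ η ∈ T, (F.N γ η β : ℝ) * ‖f η‖ := by
    rw [F.lconv_eq_sum γ β f T hT, norm_mul]
    have : ‖(1 / (F.d γ : ℂ))‖ = 1 / F.d γ := by
      rw [norm_div, norm_one, Complex.norm_real, Real.norm_of_nonneg hγ.le]
    rw [this]
    refine mul_le_mul_of_nonneg_left ?_ (by positivity)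
    refine (norm_sum_le _ _).trans (le_of_eq ?_)
    refine Finset.sum_congr rfl fun η _ => ?_
    rw [norm_mul, Complex.norm_natCast]
  have h2 : (∑ η ∈ T, (F.N γ η β : ℝ) * ‖f η‖) ^ 2 ≤
      (∑ η ∈ T, (F.N γ η β : ℝ) * F.d η) * ∑ η ∈ T, (F.N γ η β : ℝ) * ‖f η‖ ^ 2 / F.d η := by
    refine Finset.sum_sq_le_sum_mul_sum_of_sq_eq_mul T ?_ ?_ ?_
    · intro i _
      exact mul_nonneg (Nat.cast_nonneg _) (F.d_pos' i).le
    · intro i _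
      have := F.d_pos' i
      positivity
    · intro i _
      have := F.d_pos' i
      field_simp
  have h3 := F.sum_mid_le γ β T
  have h4 : 0 ≤ ∑ η ∈ T, (F.N γ η β : ℝ) * ‖f η‖ ^ 2 / F.d η := by
    refine Finset.sum_nonneg fun i _ => ?_
    have := F.d_pos' i
    positivity
  calc ‖F.lconv γ f β‖ ^ 2 ≤ ((1 / F.d γ) * ∑ η ∈ T, (F.N γ η β : ℝ) * ‖f η‖) ^ 2 :=
        pow_le_pow_left₀ (norm_nonneg _) h1 2
    _ = (1 / F.d γ) ^ 2 * (∑ η ∈ T, (F.N γ η β : ℝ) * ‖f η‖) ^ 2 := by rw [mul_pow]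
    _ ≤ (1 / F.d γ) ^ 2 * ((F.d γ * F.d β) *
          ∑ η ∈ T, (F.N γ η β : ℝ) * ‖f η‖ ^ 2 / F.d η) := by
        refine mul_le_mul_of_nonneg_left (h2.trans ?_) (by positivity)
        exact mul_le_mul_of_nonneg_right h3 h4
    _ = _ := by
        rw [Finset.mul_sum, Finset.mul_sum]
        refine Finset.sum_congr rfl fun η _ => ?_
        have := F.d_pos' η
        field_simp

lemma FusionDatum.exists_sum_le {I : Type*} (F : FusionDatum I) (γ : I) (f : I → ℂ)
    (S : Finset I) :
    ∃ T : Finset I, ∑ β ∈ S, ‖F.lconv γ f β‖ ^ 2 ≤ ∑ η ∈ T, ‖f η‖ ^ 2 := by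
  refine ⟨S.biUnion fun β => (F.finite_N_mid γ β).toFinset, ?_⟩
  set T := S.biUnion fun β => (F.finite_N_mid γ β).toFinset
  calc ∑ β ∈ S, ‖F.lconv γ f β‖ ^ 2 ≤ ∑ β ∈ S, ∑ η ∈ T,
        ‖f η‖ ^ 2 / (F.d γ * F.d η) * ((F.N γ η β : ℝ) * F.d β) := by
        refine Finset.sum_le_sum fun β hβ => F.lconv_sq_le γ β f T ?_
        exact Finset.subset_biUnion_of_mem (fun β => (F.finite_N_mid γ β).toFinset) hβ
    _ = ∑ η ∈ T, ‖f η‖ ^ 2 / (F.d γ * F.d η) * ∑ β ∈ S, ((F.N γ η β : ℝ) * F.d β) := by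
        rw [Finset.sum_comm]
        refine Finset.sum_congr rfl fun η _ => ?_
        rw [Finset.mul_sum]
    _ ≤ ∑ η ∈ T, ‖f η‖ ^ 2 := by
        refine Finset.sum_le_sum fun η _ => ?_
        have h1 := F.d_pos' η
        have h2 := F.d_pos' γ
        calc _ ≤ ‖f η‖ ^ 2 / (F.d γ * F.d η) * (F.d γ * F.d η) :=
              mul_le_mul_of_nonneg_left (F.sum_right_le γ η S) (by positivity)
          _ = _ := by field_simp

lemma FusionDatum.lconv_sum_le_norm {I : Type*} (F : FusionDatum I) (γ : I)
    (f : lp (fun _ : I => ℂ) 2) (S : Finset I) :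
    ∑ β ∈ S, ‖F.lconv γ f β‖ ^ (2 : ENNReal).toReal ≤ ‖f‖ ^ (2 : ENNReal).toReal := by
  obtain ⟨T, hT⟩ := F.exists_sum_le γ f S
  have h := lp.sum_rpow_le_norm_rpow (p := 2) (by norm_num) f T
  simp only [ENNReal.toReal_ofNat, Real.rpow_ofNat] at h ⊢
  exact hT.trans h

/-- for every `γ`, the formula `(L_γ f)(β) = (1/(d γ))·Σ_η N γ η β · f η`
defines a bounded linear operator on `ℓ²(I)` of norm at most `1`; in particular
`‖l_γ f‖₂ ≤ ‖f‖₂` for every finitely supported `f : I → ℂ`. -/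
theorem stmt3 {I : Type*} [Countable I] (F : FusionDatum I) (γ : I) :
    (∃ L : lp (fun _ : I => ℂ) 2 →L[ℂ] lp (fun _ : I => ℂ) 2,
      ‖L‖ ≤ 1 ∧
      ∀ f : lp (fun _ : I => ℂ) 2, ∀ β : I,
        (L f : ∀ _ : I, ℂ) β
          = (1 / (F.d γ : ℂ)) * ∑ᶠ η, (F.N γ η β : ℂ) * (f : ∀ _ : I, ℂ) η) ∧
    ∀ f : I → ℂ, (Function.support f).Finite → l2norm (F.lconv γ f) ≤ l2norm f := by
  refine ⟨?_, ?_⟩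
  · let L : lp (fun _ : I => ℂ) 2 →ₗ[ℂ] lp (fun _ : I => ℂ) 2 :=
      { toFun := fun f => ⟨F.lconv γ f, memℓp_gen' (F.lconv_sum_le_norm γ f)⟩
        map_add' := by
          intro f g
          ext β
          simp only [lp.coeFn_add, Pi.add_apply]
          rw [F.lconv_eq_sum γ β _ _ subset_rfl, F.lconv_eq_sum γ β _ _ subset_rfl,
            F.lconv_eq_sum γ β _ _ subset_rfl, ← mul_add, ← Finset.sum_add_distrib]
          simp only [Pi.add_apply, mul_add]
        map_smul' := by
          intro c f
          ext β
          simp only [lp.coeFn_smul, Pi.smul_apply, RingHom.id_apply, smul_eq_mul]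
          rw [F.lconv_eq_sum γ β _ _ subset_rfl, F.lconv_eq_sum γ β _ _ subset_rfl,
            mul_left_comm, Finset.mul_sum (a := c)]
          congr 1
          refine Finset.sum_congr rfl fun η _ => ?_
          simp only [Pi.smul_apply, smul_eq_mul]
          ring }
    have hL : ∀ f, ‖L f‖ ≤ 1 * ‖f‖ := by
      intro f
      rw [one_mul]
      exact lp.norm_le_of_forall_sum_le (by norm_num) (norm_nonneg f)
        (F.lconv_sum_le_norm γ f)
    exact ⟨L.mkContinuous 1 hL, L.mkContinuous_norm_le zero_le_one hL, fun f β => rfl⟩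
  · intro f hf
    unfold l2norm
    apply Real.sqrt_le_sqrt
    have hnn : 0 ≤ ∑ᶠ β, ‖f β‖ ^ 2 := finsum_nonneg fun β => by positivity
    by_cases h : (Function.support fun β => ‖F.lconv γ f β‖ ^ 2).Finite
    · rw [finsum_eq_sum _ h]
      obtain ⟨T, hT⟩ := F.exists_sum_le γ f h.toFinset
      refine hT.trans ?_
      rw [finsum_eq_sum_of_support_subset (s := hf.toFinset ∪ T)]
      · exact Finset.sum_le_sum_of_subset_of_nonneg Finset.subset_union_right
          fun i _ _ => by positivity
      · intro x hx
        simp only [Finset.coe_union, Set.Finite.coe_toFinset]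
        left
        intro h0
        simp [h0] at hx
    · rw [finsum_of_infinite_support h]
      exact hnn
end

section
/- Let a fusion datum on a countable type I admit a sequence (F_n) of nonempty finite subsets of I such that |∂ᴸ_γ F_n|_w / |F_n|_w → 0 as n → ∞ for every γ ∈ I. Define ξ_n : I → ℂ by ξ_n(α) := |F_n|_w^{-1/2}·d α for α ∈ F_n and ξ_n(α) := 0 otherwise. Then ‖ξ_n‖₂ = 1 for every n, and for every γ ∈ I one has ‖l_γ ξ_n − ξ_n‖₂ → 0 as n → ∞. -/
open scoped BigOperators
open Filter
open scoped Classical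

theorem aux_supp {I : Type*} (F : FusionDatum I) (α β : I) :
    (Function.support fun γ => F.N α β γ).Finite := by
  refine (F.mul_support_finite α β).subset ?_
  intro γ hγ
  have h1 := F.one_le_d γ
  have h2 : F.N α β γ ≠ 0 := hγ
  have h3 : (F.N α β γ : ℝ) ≠ 0 := by exact_mod_cast h2
  exact mul_ne_zero h3 (by linarith)

theorem aux_sum {I : Type*} (F : FusionDatum I) (α β : I) :
    ∑ γ ∈ (aux_supp F α β).toFinset, (F.N α β γ : ℝ) * F.d γ = F.d α * F.d β := by
  rw [← F.d_mul α β]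
  symm
  apply finsum_eq_sum_of_support_subset
  intro γ hγ
  simp only [Function.mem_support, ne_eq, mul_eq_zero, not_or] at hγ
  have h2 : F.N α β γ ≠ 0 := by exact_mod_cast hγ.1
  simpa using h2

theorem aux_bdry_finite {I : Type*} (F : FusionDatum I) (γ : I) (S : Finset I) :
    (F.lBoundary γ (S : Set I)).Finite := by
  refine (S.finite_toSet.union (S.finite_toSet.biUnion
    (fun β _ => aux_supp F (F.conj γ) β))).subset ?_
  rintro α (⟨h, -⟩ | ⟨-, β, hβ, h⟩)
  · exact Or.inl h
  · refine Or.inr (Set.mem_biUnion hβ ?_)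
    rw [F.frobenius₂] at h
    exact h.ne'

theorem aux_conv {I : Type*} (F : FusionDatum I) (γ : I) (S : Finset I) (β : I) :
    ∃ r : ℝ, 0 ≤ r ∧ r ≤ F.d β ∧
      F.lconv γ (xiC F S) β = (((Real.sqrt (F.wcard (S : Set I)))⁻¹ * r : ℝ) : ℂ) ∧
      (β ∉ F.lBoundary (F.conj γ) (S : Set I) → r = if β ∈ S then F.d β else 0) := by
  have hd : ∀ α, 0 < F.d α := fun α => lt_of_lt_of_le one_pos (F.one_le_d α)
  set c := (Real.sqrt (F.wcard (S : Set I)))⁻¹ with hc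
  set T := (aux_supp F (F.conj γ) β).toFinset with hT
  have hTm : ∀ η, η ∈ T ↔ F.N (F.conj γ) β η ≠ 0 := by intro η; simp [hT]
  have hsum := aux_sum F (F.conj γ) β
  rw [← hT, F.d_conj] at hsum
  set s : ℝ := ∑ η ∈ T, if η ∈ S then (F.N (F.conj γ) β η : ℝ) * F.d η else 0 with hs
  have hnn : ∀ η, 0 ≤ (F.N (F.conj γ) β η : ℝ) * F.d η :=
    fun η => mul_nonneg (Nat.cast_nonneg _) (hd η).le
  have hs0 : 0 ≤ s := Finset.sum_nonneg (fun η _ => by split_ifs; exacts [hnn η, le_rfl])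
  have hs1 : s ≤ F.d γ * F.d β := by
    rw [← hsum]
    exact Finset.sum_le_sum (fun η _ => by split_ifs; exacts [le_rfl, hnn η])
  refine ⟨s / F.d γ, div_nonneg hs0 (hd γ).le, ?_, ?_, ?_⟩
  · rw [div_le_iff₀ (hd γ)]; linarith
  · have h1 : ∑ᶠ η, (F.N γ η β : ℂ) * xiC F S η = ((c * s : ℝ) : ℂ) := by
      rw [finsum_eq_sum_of_support_subset (s := T)]
      · rw [hs, Finset.mul_sum, Complex.ofReal_sum]
        refine Finset.sum_congr rfl (fun η _ => ?_)
        rw [F.frobenius₂ γ η β]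
        unfold xiC
        split_ifs
        · rw [← hc]; push_cast; ring
        · simp
      · intro η hη
        simp only [Function.mem_support, ne_eq, mul_eq_zero, not_or] at hη
        have h2 : F.N γ η β ≠ 0 := by exact_mod_cast hη.1
        rw [F.frobenius₂] at h2
        exact (hTm η).2 h2
    unfold FusionDatum.lconv
    rw [h1]; push_cast; ring
  · intro hβ
    simp only [FusionDatum.lBoundary, Set.mem_setOf_eq, Finset.mem_coe, not_or, not_and,
      not_exists] at hβ
    split_ifs with hS
    · have : s = F.d γ * F.d β := by
        rw [← hsum]
        refine Finset.sum_congr rfl (fun η hη => ?_)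
        rw [if_pos]
        by_contra hn
        exact hβ.1 hS η hn (Nat.pos_of_ne_zero ((hTm η).1 hη))
      rw [this]; field_simp [(hd γ).ne']
    · have : s = 0 := by
        refine Finset.sum_eq_zero (fun η hη => ?_)
        rw [if_neg]
        intro hn
        exact hβ.2 hS η hn (Nat.pos_of_ne_zero ((hTm η).1 hη))
      rw [this]; simp

theorem aux_wpos {I : Type*} (F : FusionDatum I) (S : Finset I) (h : S.Nonempty) :
    0 < F.wcard (S : Set I) := by
  unfold FusionDatum.wcard
  rw [finsum_mem_coe_finset]
  exact Finset.sum_pos (fun α _ => pow_pos (lt_of_lt_of_le one_pos (F.one_le_d α)) 2) h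

theorem aux_bound {I : Type*} (F : FusionDatum I) (γ : I) (S : Finset I) (h : S.Nonempty) :
    l2norm (F.lconv γ (xiC F S) - xiC F S) ≤
      Real.sqrt (F.wcard (F.lBoundary (F.conj γ) (S : Set I)) / F.wcard (S : Set I)) := by
  have hW := aux_wpos F S h
  have hc2 : ((Real.sqrt (F.wcard (S : Set I)))⁻¹) ^ 2 = (F.wcard (S : Set I))⁻¹ := by
    rw [inv_pow, Real.sq_sqrt hW.le]
  have hB := aux_bdry_finite F (F.conj γ) S
  have key : ∀ β, ‖(F.lconv γ (xiC F S) - xiC F S) β‖ ^ 2 ≤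
      (F.wcard (S : Set I))⁻¹ * F.d β ^ 2 ∧
      (β ∉ F.lBoundary (F.conj γ) (S : Set I) →
        ‖(F.lconv γ (xiC F S) - xiC F S) β‖ ^ 2 = 0) := by
    intro β
    obtain ⟨r, h0, h1, h2, h3⟩ := aux_conv F γ S β
    have e : (F.lconv γ (xiC F S) - xiC F S) β =
        (((Real.sqrt (F.wcard (S : Set I)))⁻¹ * (r - if β ∈ S then F.d β else 0) : ℝ) : ℂ) := by
      rw [Pi.sub_apply, h2]
      unfold xiC
      split_ifs <;> push_cast <;> ring
    rw [e, Complex.norm_real, Real.norm_eq_abs, sq_abs, mul_pow, hc2]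
    constructor
    · refine mul_le_mul_of_nonneg_left ?_ (inv_nonneg.2 hW.le)
      split_ifs <;> nlinarith
    · intro hβ
      rw [h3 hβ]; simp
  unfold l2norm
  refine Real.sqrt_le_sqrt ?_
  rw [finsum_eq_sum_of_support_subset (s := hB.toFinset)]
  · unfold FusionDatum.wcard at *
    rw [finsum_mem_eq_finite_toFinset_sum _ hB, div_eq_inv_mul, Finset.mul_sum]
    exact Finset.sum_le_sum (fun β _ => (key β).1)
  · intro β hβ
    by_contra hn
    exact hβ ((key β).2 (by simpa using hn))

theorem aux_norm {I : Type*} (F : FusionDatum I) (S : Finset I) (h : S.Nonempty) :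
    l2norm (xiC F S) = 1 := by
  have hW := aux_wpos F S h
  have hc2 : ((Real.sqrt (F.wcard (S : Set I)))⁻¹) ^ 2 = (F.wcard (S : Set I))⁻¹ := by
    rw [inv_pow, Real.sq_sqrt hW.le]
  unfold l2norm
  rw [finsum_eq_sum_of_support_subset (s := S)]
  · have : ∑ β ∈ S, ‖xiC F S β‖ ^ 2 = ∑ β ∈ S, (F.wcard (S : Set I))⁻¹ * F.d β ^ 2 := by
      refine Finset.sum_congr rfl (fun β hβ => ?_)
      unfold xiC
      rw [if_pos hβ, Complex.norm_real, Real.norm_eq_abs, sq_abs, mul_pow, hc2]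
    rw [this, ← Finset.mul_sum]
    have e : ∑ β ∈ S, F.d β ^ 2 = F.wcard (S : Set I) := by
      unfold FusionDatum.wcard
      rw [finsum_mem_coe_finset]
    rw [e, inv_mul_cancel₀ hW.ne', Real.sqrt_one]
  · intro β hβ
    by_contra hn
    apply hβ
    have : β ∉ S := hn
    simp [xiC, this]

/-- given a left-Følner sequence `(F_n)`, the vectors
`ξ_n(α) = |F_n|_w^{-1/2}·d α` for `α ∈ F_n` (and `0` otherwise) are unit vectors in
`ℓ²(I)` and `‖l_γ ξ_n − ξ_n‖₂ → 0` for every `γ`. -/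
theorem stmt4 {I : Type*} [Countable I] (F : FusionDatum I) (Fn : ℕ → Finset I)
    (hne : ∀ n, (Fn n).Nonempty)
    (hFol : ∀ γ : I, Tendsto
      (fun n => F.wcard (F.lBoundary γ (Fn n : Set I)) / F.wcard (Fn n : Set I))
      atTop (nhds 0)) :
    (∀ n, l2norm (xiC F (Fn n)) = 1) ∧
    ∀ γ : I, Tendsto (fun n => l2norm (F.lconv γ (xiC F (Fn n)) - xiC F (Fn n)))
      atTop (nhds 0) := by

  refine ⟨fun n => aux_norm F (Fn n) (hne n), fun γ => ?_⟩
  have h := (hFol (F.conj γ)).sqrt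
  rw [Real.sqrt_zero] at h
  exact squeeze_zero (fun n => Real.sqrt_nonneg _) (fun n => aux_bound F γ (Fn n) (hne n)) h
end

section
/- Let a fusion datum be given on a countable type I, let A be a unital C*-algebra, let σ_γ : A → A (γ ∈ I) be ℂ-linear maps, and let φ be a state on A with φ(σ_γ(a)) = φ(a) for all γ ∈ I and a ∈ A. Let (ξ_n) be a sequence of finitely supported functions I → A such that ‖δ_γ *_σ ξ_n − ξ_n‖_{2,A} → 0 as n → ∞ for every γ ∈ I. Define η_n : I → ℂ by η_n(α) := φ(ξ_n(α)). Then ‖η_n‖₂ ≤ ‖ξ_n‖_{2,A} for every n, and for every γ ∈ I one has ‖l_γ η_n − η_n‖₂ → 0 as n → ∞. -/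
open scoped BigOperators
open Filter
open scoped Classical

/-- States are hermitian. -/
theorem state_star {A : Type*} [NormedRing A] [StarRing A] [NormedAlgebra ℂ A]
    [StarModule ℂ A] (φ : CStarState A) (a : A) :
    (φ.toFun (star a)).re = (φ.toFun a).re ∧ (φ.toFun (star a)).im = -(φ.toFun a).im := by
  have h0 := (φ.pos a).2
  have h1 := (φ.pos (a + 1)).2
  have h2 := (φ.pos (a + Complex.I • (1 : A))).2
  simp only [star_add, star_one, star_smul, add_mul, mul_add, mul_one, one_mul, smul_mul_assoc,
    mul_smul_comm, map_add, map_smul, φ.map_one, smul_eq_mul, Complex.add_im, Complex.mul_im,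
    Complex.mul_re, Complex.star_def, Complex.conj_I, Complex.neg_re, Complex.neg_im, Complex.I_re,
    Complex.I_im, Complex.one_re, Complex.one_im] at h0 h1 h2
  constructor <;> linarith

/-- Cauchy-Schwarz for states. -/
theorem state_cs {A : Type*} [NormedRing A] [StarRing A] [NormedAlgebra ℂ A]
    [StarModule ℂ A] (φ : CStarState A) (a : A) :
    ‖φ.toFun a‖ ^ 2 ≤ (φ.toFun (a * star a)).re := by
  obtain ⟨hr, hi⟩ := state_star φ a
  have h := (φ.pos (star a - star (φ.toFun a) • (1 : A))).1
  simp only [star_sub, star_star, star_one, star_smul, sub_mul, mul_sub, mul_one, one_mul,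
    smul_mul_assoc, mul_smul_comm, map_sub, map_smul, φ.map_one, smul_eq_mul, Complex.sub_re,
    Complex.mul_re, Complex.mul_im, Complex.star_def, Complex.conj_re, Complex.conj_im,
    Complex.one_re, Complex.one_im, hr, hi] at h
  rw [← Complex.normSq_eq_norm_sq, Complex.normSq_apply]
  linarith

/-- States are bounded by the norm on self-adjoint elements. -/
theorem state_le_norm {A : Type*} [NormedRing A] [StarRing A] [CStarRing A] [NormedAlgebra ℂ A]
    [StarModule ℂ A] [CompleteSpace A] (φ : CStarState A) (a : A) (ha : IsSelfAdjoint a) :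
    (φ.toFun a).re ≤ ‖a‖ := by
  let : CStarAlgebra A := {}
  let := CStarAlgebra.spectralOrder A
  let := CStarAlgebra.spectralOrderedRing A
  have h := IsSelfAdjoint.le_algebraMap_norm_self (a := a) ha
  rw [← sub_nonneg, CStarAlgebra.nonneg_iff_eq_star_mul_self] at h
  obtain ⟨b, hb⟩ := h
  have h1 := (φ.pos b).1
  rw [← hb, map_sub, Complex.sub_re] at h1
  have h2 : algebraMap ℝ A ‖a‖ = ((‖a‖ : ℝ) : ℂ) • (1 : A) := by
    rw [Algebra.algebraMap_eq_smul_one]; simp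
  rw [h2, map_smul, φ.map_one] at h1
  simp at h1
  linarith

/-- Coordinatewise application of a state is contractive. -/
theorem l2norm_state_le {I : Type*} {A : Type*} [NormedRing A] [StarRing A] [CStarRing A]
    [NormedAlgebra ℂ A] [StarModule ℂ A] [CompleteSpace A] (φ : CStarState A)
    (f : I → A) (hf : (Function.support f).Finite) :
    l2norm (fun α => φ.toFun (f α)) ≤ norm2A f := by
  unfold l2norm norm2A innerA
  apply Real.sqrt_le_sqrt
  rw [finsum_eq_sum_of_support_subset (s := hf.toFinset),
    finsum_eq_sum_of_support_subset (s := hf.toFinset)]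
  · calc _ ≤ ∑ i ∈ hf.toFinset, (φ.toFun (f i * star (f i))).re :=
          Finset.sum_le_sum fun i _ => state_cs φ (f i)
      _ = (φ.toFun (∑ i ∈ hf.toFinset, f i * star (f i))).re := by
          rw [map_sum, Complex.re_sum]
      _ ≤ _ := by
          apply state_le_norm
          rw [isSelfAdjoint_iff, star_sum]
          simp
  · intro i hi
    simp only [Set.Finite.coe_toFinset, Function.mem_support] at hi ⊢
    rintro h
    simp [h] at hi
  · intro i hi
    simp only [Set.Finite.coe_toFinset, Function.mem_support] at hi ⊢
    rintro h
    simp [h] at hi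

/-- The twisted convolution of a finitely supported function is finitely supported. -/
theorem tconv_support_finite {I : Type*} (F : FusionDatum I) {A : Type*} [NormedRing A]
    [NormedAlgebra ℂ A] (σ : I → A →ₗ[ℂ] A) (γ : I) (f : I → A)
    (hf : (Function.support f).Finite) :
    (Function.support (F.tconv (fun γ' => ⇑(σ γ')) γ f)).Finite := by
  refine (hf.biUnion fun η _ => F.mul_support_finite γ η).subset ?_
  intro β hβ
  by_contra hcon
  apply hβ
  unfold FusionDatum.tconv
  rw [finsum_eq_zero_of_forall_eq_zero, smul_zero]
  intro η
  by_cases h : f η = 0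
  · simp [h]
  · have h2 : F.N γ η β = 0 := by
      by_contra h3
      apply hcon
      simp only [Set.mem_iUnion, Function.mem_support]
      have := F.one_le_d β
      exact ⟨η, h, mul_ne_zero (by exact_mod_cast h3) (by positivity)⟩
    simp [h2]

/-- An invariant state intertwines the two convolutions. -/
theorem state_tconv {I : Type*} (F : FusionDatum I) {A : Type*} [NormedRing A] [StarRing A]
    [NormedAlgebra ℂ A] (σ : I → A →ₗ[ℂ] A) (φ : CStarState A)
    (hinv : ∀ (γ : I) (a : A), φ.toFun (σ γ a) = φ.toFun a) (γ : I) (f : I → A)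
    (hf : (Function.support f).Finite) (β : I) :
    φ.toFun (F.tconv (fun γ' => ⇑(σ γ')) γ f β) = F.lconv γ (fun α => φ.toFun (f α)) β := by
  unfold FusionDatum.tconv FusionDatum.lconv
  rw [finsum_eq_sum_of_support_subset (s := hf.toFinset),
    finsum_eq_sum_of_support_subset (s := hf.toFinset)]
  · simp only [map_smul, map_sum, map_nsmul, hinv, smul_eq_mul, one_div,
      Complex.ofReal_inv]
    simp only [nsmul_eq_mul]
  · intro i hi
    simp only [Set.Finite.coe_toFinset, Function.mem_support] at hi ⊢
    rintro h
    simp [h] at hi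
  · intro i hi
    simp only [Set.Finite.coe_toFinset, Function.mem_support] at hi ⊢
    rintro h
    simp [h] at hi

/-- applying a `σ`-invariant state coordinatewise to an `A`-valued
Følner-type sequence produces a scalar sequence with `‖η_n‖₂ ≤ ‖ξ_n‖_{2,A}` and
`‖l_γ η_n − η_n‖₂ → 0` for every `γ`. -/
theorem stmt9 {I : Type*} [Countable I] (F : FusionDatum I)
    {A : Type*} [NormedRing A] [StarRing A] [CStarRing A] [NormedAlgebra ℂ A]
    [StarModule ℂ A] [CompleteSpace A]
    (σ : I → A →ₗ[ℂ] A) (φ : CStarState A)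
    (hinv : ∀ (γ : I) (a : A), φ.toFun (σ γ a) = φ.toFun a)
    (ξ : ℕ → I → A) (hsupp : ∀ n, (Function.support (ξ n)).Finite)
    (hconv : ∀ γ : I, Tendsto
      (fun n => norm2A (F.tconv (fun γ' => ⇑(σ γ')) γ (ξ n) - ξ n)) atTop (nhds 0)) :
    (∀ n, l2norm (fun α => φ.toFun (ξ n α)) ≤ norm2A (ξ n)) ∧
    ∀ γ : I, Tendsto
      (fun n => l2norm (F.lconv γ (fun α => φ.toFun (ξ n α)) - fun α => φ.toFun (ξ n α)))
      atTop (nhds 0) := by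
  refine ⟨fun n => l2norm_state_le φ _ (hsupp n), fun γ => ?_⟩
  refine squeeze_zero (fun n => Real.sqrt_nonneg _) (fun n => ?_) (hconv γ)
  have h := l2norm_state_le φ (F.tconv (fun γ' => ⇑(σ γ')) γ (ξ n) - ξ n)
    (((tconv_support_finite F σ γ _ (hsupp n)).union (hsupp n)).subset
      (Function.support_sub _ _))
  convert h using 2
  funext β
  simp only [Pi.sub_apply, map_sub, state_tconv F σ φ hinv γ _ (hsupp n)]
end
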